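/- arXiv:2407.00636 — 11 statements merged into one kernel-verified Lean document; each statement's English description precedes it below -/
import Mathlib

section
/- Let X be a lattice, C a linearly ordered set, and f : X → C. If f is lattice superextremal, then f is quasisupermodular. -/
/-- `f` is lattice superextremal if for all `x, y` there is `t > f y` with
either `f (x ⊓ y) ⊔ f (x ⊔ y) ≥ f x ⊔ t` or `f (x ⊓ y) ⊓ f (x ⊔ y) ≥ f x ⊓ t`. -/
def LatticeSuperextremal {X C : Type*} [Lattice X] [LinearOrder C] (f : X → C) : Prop :=
  ∀ x y : X, ∃ t : C, f y < t ∧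
    (f x ⊔ t ≤ f (x ⊓ y) ⊔ f (x ⊔ y) ∨ f x ⊓ t ≤ f (x ⊓ y) ⊓ f (x ⊔ y))

/-- `f` is quasisupermodular if `f (x ⊓ y) ≤ f x → f y ≤ f (x ⊔ y)` and
`f (x ⊓ y) < f x → f y < f (x ⊔ y)` for all `x, y`. -/
def Quasisupermodular {X C : Type*} [Lattice X] [LinearOrder C] (f : X → C) : Prop :=
  ∀ x y : X, (f (x ⊓ y) ≤ f x → f y ≤ f (x ⊔ y)) ∧ (f (x ⊓ y) < f x → f y < f (x ⊔ y))

theorem le_of_sup_le_sup_or_inf_le_inf_of_lt {C : Type*} [LinearOrder C] {a b c d : C}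
    (h : a ⊔ b ≤ c ⊔ d ∨ a ⊓ b ≤ c ⊓ d) (hca : c < a) : b ≤ d := by
  by_contra! hdb
  rcases h with hsup | hinf
  · exact (max_lt_max hca hdb).not_ge hsup
  · exact (min_lt_min hca hdb).not_ge hinf

/-- Lemma 2.4: a lattice superextremal map is quasisupermodular. -/
theorem quasisupermodular_of_latticeSuperextremal {X C : Type*} [Lattice X] [LinearOrder C]
    (f : X → C) (hf : LatticeSuperextremal f) : Quasisupermodular f := by
  refine fun x y ↦ ⟨fun hx ↦ ?_, fun hx ↦ ?_⟩
  · obtain ⟨t, hxt, ht⟩ := hf y x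
    rw [inf_comm y x, sup_comm y x, sup_comm (f y) t, inf_comm (f y) t] at ht
    exact le_of_sup_le_sup_or_inf_le_inf_of_lt ht (hx.trans_lt hxt)
  · obtain ⟨t, hyt, ht⟩ := hf x y
    exact hyt.trans_le (le_of_sup_le_sup_or_inf_le_inf_of_lt ht hx)
end

section
/- Let X be a lattice, C a linearly ordered set with no maximum element, and f : X → C. Then f is quasisupermodular if and only if f is lattice superextremal. -/
/-! In a chain, the disjunction of the two lattice inequalities is equivalent to a pair of
implications. Eliminating `t` from these, superextremality at `(x, y)` becomes the strict
implication of quasisupermodularity at `(x, y)` together with the weak one at `(y, x)`. -/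

section LinearOrder

variable {C : Type*} [LinearOrder C]

theorem le_of_sup_le_sup_or_inf_le_inf {a t p q : C}
    (h : a ⊔ t ≤ p ⊔ q ∨ a ⊓ t ≤ p ⊓ q) (hpa : p < a) : t ≤ q := by
  rcases h with hsup | hinf
  · have hp : p < a ⊔ t := lt_sup_of_lt_left hpa
    exact le_sup_right.trans ((le_sup_iff.1 hsup).resolve_left hp.not_ge)
  · have ha : ¬a ≤ p ⊓ q := fun ha => hpa.not_ge (ha.trans inf_le_left)
    exact ((inf_le_iff.1 hinf).resolve_left ha).trans inf_le_right

theorem sup_le_sup_or_inf_le_inf_iff {a t p q : C} :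
    a ⊔ t ≤ p ⊔ q ∨ a ⊓ t ≤ p ⊓ q ↔ (p < a → t ≤ q) ∧ (p < t → a ≤ q) := by
  constructor
  · intro h
    have h' : t ⊔ a ≤ p ⊔ q ∨ t ⊓ a ≤ p ⊓ q := by rwa [sup_comm t, inf_comm t]
    exact ⟨le_of_sup_le_sup_or_inf_le_inf h, le_of_sup_le_sup_or_inf_le_inf h'⟩
  · rintro ⟨ht, ha⟩
    rcases le_or_gt a p with hap | hpa <;> rcases le_or_gt t p with htp | hpt
    · exact .inl (le_sup_of_le_left (sup_le hap htp))
    · exact .inr (inf_le_of_left_le (le_inf hap (ha hpt)))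
    · exact .inr (inf_le_of_right_le (le_inf htp (ht hpa)))
    · exact .inl (le_sup_of_le_right (sup_le (ha hpt) (ht hpa)))

theorem exists_lt_and_sup_le_sup_or_inf_le_inf_iff {a b p q : C} :
    (∃ t, b < t ∧ (a ⊔ t ≤ p ⊔ q ∨ a ⊓ t ≤ p ⊓ q)) ↔
      ¬IsMax b ∧ (p < a → b < q) ∧ (p ≤ b → a ≤ q) := by
  simp only [sup_le_sup_or_inf_le_inf_iff]
  constructor
  · rintro ⟨t, hbt, ht, ha⟩
    exact ⟨hbt.not_isMax, fun hpa => hbt.trans_le (ht hpa), fun hpb => ha (hpb.trans_lt hbt)⟩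
  · rintro ⟨hb, hbq, haq⟩
    obtain ⟨s, hbs, hsq⟩ : ∃ s, b < s ∧ (p < a → s ≤ q) := by
      by_cases hpa : p < a
      · exact ⟨q, hbq hpa, fun _ => le_rfl⟩
      · obtain ⟨s, hbs⟩ := not_isMax_iff.1 hb
        exact ⟨s, hbs, fun h => absurd h hpa⟩
    rcases le_or_gt p b with hpb | hbp
    · exact ⟨s, hbs, hsq, fun _ => haq hpb⟩
    · -- Capping `s` at `p` makes the second implication vacuous.
      exact ⟨s ⊓ p, lt_inf_iff.2 ⟨hbs, hbp⟩, fun hpa => inf_le_of_left_le (hsq hpa),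
        fun h => absurd h inf_le_right.not_gt⟩

end LinearOrder

section Lattice

variable {X C : Type*} [Lattice X] [LinearOrder C]

theorem latticeSuperextremal_iff {f : X → C} :
    LatticeSuperextremal f ↔ ∀ x y, ¬IsMax (f y) ∧
      (f (x ⊓ y) < f x → f y < f (x ⊔ y)) ∧ (f (x ⊓ y) ≤ f y → f x ≤ f (x ⊔ y)) :=
  forall₂_congr fun _ _ => exists_lt_and_sup_le_sup_or_inf_le_inf_iff

theorem quasisupermodular_iff_latticeSuperextremal_general (f : X → C) :
    Quasisupermodular f ∧ (∀ x, ¬IsMax (f x)) ↔ LatticeSuperextremal f := by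
  rw [latticeSuperextremal_iff]
  constructor
  · rintro ⟨hf, hmax⟩ x y
    have weak_swap : f (x ⊓ y) ≤ f y → f x ≤ f (x ⊔ y) := by
      simpa only [inf_comm, sup_comm] using (hf y x).1
    exact ⟨hmax y, (hf x y).2, weak_swap⟩
  · intro h
    refine ⟨fun x y => ?_, fun x => (h x x).1⟩
    have weak_swap : f (x ⊓ y) ≤ f x → f y ≤ f (x ⊔ y) := by
      simpa only [inf_comm, sup_comm] using (h y x).2.2
    exact ⟨weak_swap, (h x y).2.1⟩

end Lattice

/-- Lemma 2.5: if the chain `C` has no maximum element, then `f : X → C` is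
quasisupermodular if and only if it is lattice superextremal. -/
theorem quasisupermodular_iff_latticeSuperextremal {X C : Type*} [Lattice X] [LinearOrder C]
    (hC : ∀ c : C, ∃ c' : C, c < c') (f : X → C) :
    Quasisupermodular f ↔ LatticeSuperextremal f := by
  rw [← quasisupermodular_iff_latticeSuperextremal_general,
    and_iff_left fun x => not_isMax_iff.2 (hC (f x))]
end

section
/- Let X be a lattice, C a linearly ordered set, and f : X → C. Then f is subextremal if and only if f is both meet-subextremal and join-subextremal. -/
/-- `f` is subextremal if for all `x, y`, either `f (x ⊓ y) ⊔ f (x ⊔ y) ≤ f x ⊔ f y`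
or `f (x ⊓ y) ⊓ f (x ⊔ y) ≤ f x ⊓ f y`. -/
def Subextremal {X C : Type*} [Lattice X] [LinearOrder C] (f : X → C) : Prop :=
  ∀ x y : X, f (x ⊓ y) ⊔ f (x ⊔ y) ≤ f x ⊔ f y ∨ f (x ⊓ y) ⊓ f (x ⊔ y) ≤ f x ⊓ f y

/-- `f` is meet-subextremal if for all `x, y`, either `f (x ⊓ y) ≤ f x` or
`f (x ⊔ y) ≤ f x ⊔ f y`. -/
def MeetSubextremal {X C : Type*} [Lattice X] [LinearOrder C] (f : X → C) : Prop :=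
  ∀ x y : X, f (x ⊓ y) ≤ f x ∨ f (x ⊔ y) ≤ f x ⊔ f y

/-- `f` is join-subextremal if for all `x, y`, either `f (x ⊓ y) ≤ f x ⊔ f y` or
`f (x ⊔ y) ≤ f x`. -/
def JoinSubextremal {X C : Type*} [Lattice X] [LinearOrder C] (f : X → C) : Prop :=
  ∀ x y : X, f (x ⊓ y) ≤ f x ⊔ f y ∨ f (x ⊔ y) ≤ f x

/-!
Write `a = f (x ⊓ y)`, `b = f (x ⊔ y)`, `m = f x ⊓ f y` and `M = f x ⊔ f y`. Applied to both
`(x, y)` and `(y, x)`, meet-subextremality says `a ≤ m ∨ b ≤ M`, and dually join-subextremality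
says `b ≤ m ∨ a ≤ M`. Since `m ≤ M`, distributing the conjunction of the two leaves
`(a ≤ M ∧ b ≤ M) ∨ a ≤ m ∨ b ≤ m`. In a chain the last two alternatives amount to `a ⊓ b ≤ m`.
-/

theorem sup_le_or_inf_le_iff_of_le {C : Type*} [LinearOrder C] {a b m M : C} (hmM : m ≤ M) :
    a ⊔ b ≤ M ∨ a ⊓ b ≤ m ↔ (a ≤ m ∨ b ≤ M) ∧ (b ≤ m ∨ a ≤ M) := by
  rw [sup_le_iff, inf_le_iff]
  constructor
  · rintro (⟨haM, hbM⟩ | ham | hbm)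
    · exact ⟨.inr hbM, .inr haM⟩
    · exact ⟨.inl ham, .inr (ham.trans hmM)⟩
    · exact ⟨.inr (hbm.trans hmM), .inl hbm⟩
  · rintro ⟨ham | hbM, hbm | haM⟩
    · exact .inr (.inl ham)
    · exact .inr (.inl ham)
    · exact .inr (.inr hbm)
    · exact .inl ⟨haM, hbM⟩

section

variable {X C : Type*} [Lattice X] [LinearOrder C] {f : X → C}

theorem meetSubextremal_iff_le_inf_or_le_sup :
    MeetSubextremal f ↔ ∀ x y, f (x ⊓ y) ≤ f x ⊓ f y ∨ f (x ⊔ y) ≤ f x ⊔ f y := by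
  refine ⟨fun h x y => ?_, fun h x y => (h x y).imp_left fun hinf => hinf.trans inf_le_left⟩
  have h_swap : f (x ⊓ y) ≤ f y ∨ f (x ⊔ y) ≤ f x ⊔ f y := by
    simpa only [inf_comm, sup_comm] using h y x
  rw [le_inf_iff, and_or_right]
  exact ⟨h x y, h_swap⟩

theorem meetSubextremal_comp_ofDual_iff :
    MeetSubextremal (f ∘ OrderDual.ofDual) ↔ JoinSubextremal f :=
  forall₂_congr fun _ _ => or_comm

theorem joinSubextremal_iff_le_inf_or_le_sup :
    JoinSubextremal f ↔ ∀ x y, f (x ⊔ y) ≤ f x ⊓ f y ∨ f (x ⊓ y) ≤ f x ⊔ f y :=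
  meetSubextremal_comp_ofDual_iff.symm.trans meetSubextremal_iff_le_inf_or_le_sup

end

/-- Lemma 2.8: `f` is subextremal iff it is both meet-subextremal and join-subextremal. -/
theorem subextremal_iff_meet_and_join {X C : Type*} [Lattice X] [LinearOrder C] (f : X → C) :
    Subextremal f ↔ MeetSubextremal f ∧ JoinSubextremal f := by
  rw [meetSubextremal_iff_le_inf_or_le_sup, joinSubextremal_iff_le_inf_or_le_sup]
  simp only [← forall_and]
  exact forall₂_congr fun _ _ => sup_le_or_inf_le_iff_of_le inf_le_sup
end

section
/- Let X be a lattice, C a linearly ordered set, and f : X → C. Then f is superextremal if and only if f is both meet-superextremal and join-superextremal. -/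
/-- `f` is superextremal if for all `x, y`, either `f (x ⊓ y) ⊔ f (x ⊔ y) ≥ f x ⊔ f y`
or `f (x ⊓ y) ⊓ f (x ⊔ y) ≥ f x ⊓ f y`. -/
def Superextremal {X C : Type*} [Lattice X] [LinearOrder C] (f : X → C) : Prop :=
  ∀ x y : X, f x ⊔ f y ≤ f (x ⊓ y) ⊔ f (x ⊔ y) ∨ f x ⊓ f y ≤ f (x ⊓ y) ⊓ f (x ⊔ y)

/-- `f` is meet-superextremal if for all `x, y`, either `f (x ⊓ y) ≥ f x` or
`f (x ⊔ y) ≥ f x ⊓ f y`. -/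
def MeetSuperextremal {X C : Type*} [Lattice X] [LinearOrder C] (f : X → C) : Prop :=
  ∀ x y : X, f x ≤ f (x ⊓ y) ∨ f x ⊓ f y ≤ f (x ⊔ y)

/-- `f` is join-superextremal if for all `x, y`, either `f (x ⊓ y) ≥ f x ⊓ f y` or
`f (x ⊔ y) ≥ f x`. -/
def JoinSuperextremal {X C : Type*} [Lattice X] [LinearOrder C] (f : X → C) : Prop :=
  ∀ x y : X, f x ⊓ f y ≤ f (x ⊓ y) ∨ f x ≤ f (x ⊔ y)

/-!
Imposing the meet condition at both `(x, y)` and `(y, x)` amounts to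
`f x ⊔ f y ≤ f (x ⊓ y) ∨ f x ⊓ f y ≤ f (x ⊔ y)`, and dually for the join condition. Since
`f x ⊓ f y ≤ f x ⊔ f y`, distributing the conjunction of the two symmetric conditions over the
disjunctions leaves only `f x ⊔ f y ≤ f (x ⊓ y)`, `f x ⊔ f y ≤ f (x ⊔ y)` or
`f x ⊓ f y ≤ f (x ⊓ y) ⊓ f (x ⊔ y)`, which is superextremality because `C` is linearly ordered.
-/

section Symmetrization

variable {X C : Type*} [Lattice X] [LinearOrder C] {f : X → C}

theorem meetSuperextremal_iff_sup_le_or_inf_le :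
    MeetSuperextremal f ↔ ∀ x y : X, f x ⊔ f y ≤ f (x ⊓ y) ∨ f x ⊓ f y ≤ f (x ⊔ y) := by
  refine ⟨fun h x y => ?_, fun h x y => (h x y).imp_left le_sup_left.trans⟩
  have h_swap : f y ≤ f (x ⊓ y) ∨ f x ⊓ f y ≤ f (x ⊔ y) := by
    simpa only [inf_comm, sup_comm] using h y x
  rw [sup_le_iff, and_or_right]
  exact ⟨h x y, h_swap⟩

theorem joinSuperextremal_iff_meetSuperextremal_comp_ofDual :
    JoinSuperextremal f ↔ MeetSuperextremal (f ∘ OrderDual.ofDual) :=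
  forall₂_congr fun _ _ => or_comm

theorem joinSuperextremal_iff_inf_le_or_sup_le :
    JoinSuperextremal f ↔ ∀ x y : X, f x ⊓ f y ≤ f (x ⊓ y) ∨ f x ⊔ f y ≤ f (x ⊔ y) := by
  rw [joinSuperextremal_iff_meetSuperextremal_comp_ofDual, meetSuperextremal_iff_sup_le_or_inf_le]
  exact forall₂_congr fun _ _ => or_comm

end Symmetrization

theorem le_sup_or_le_inf_iff_of_le {C : Type*} [LinearOrder C] {l u : C} (hlu : l ≤ u) (a b : C) :
    u ≤ a ⊔ b ∨ l ≤ a ⊓ b ↔ (u ≤ a ∨ l ≤ b) ∧ (l ≤ a ∨ u ≤ b) := by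
  have le_left : u ≤ a → l ≤ a := hlu.trans
  have le_right : u ≤ b → l ≤ b := hlu.trans
  rw [le_sup_iff, le_inf_iff]
  tauto

/-- Dual of Lemma 2.8: `f` is superextremal iff it is both meet-superextremal and
join-superextremal. -/
theorem superextremal_iff_meet_and_join {X C : Type*} [Lattice X] [LinearOrder C] (f : X → C) :
    Superextremal f ↔ MeetSuperextremal f ∧ JoinSuperextremal f := by
  rw [meetSuperextremal_iff_sup_le_or_inf_le, joinSuperextremal_iff_inf_le_or_sup_le]
  simp only [← forall_and]
  exact forall₂_congr fun x y => le_sup_or_le_inf_iff_of_le inf_le_sup (f (x ⊓ y)) (f (x ⊔ y))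
end

section
/- Let X be a lattice, C a linearly ordered set, and f : X → C. If f is weakly quasisupermodular, then f is superextremal. -/
/-- `f` is weakly quasisupermodular if `f (x ⊓ y) < f x → f x ⊓ f y < f (x ⊔ y)` and
`f (x ⊔ y) < f x → f x ⊓ f y < f (x ⊓ y)` for all `x, y`. -/
def WeaklyQuasisupermodular {X C : Type*} [Lattice X] [LinearOrder C] (f : X → C) : Prop :=
  ∀ x y : X, (f (x ⊓ y) < f x → f x ⊓ f y < f (x ⊔ y)) ∧
    (f (x ⊔ y) < f x → f x ⊓ f y < f (x ⊓ y))

namespace WeaklyQuasisupermodular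

variable {X C : Type*} [Lattice X] [LinearOrder C] {f : X → C} {x y : X}

theorem inf_lt_inf_of_sup_lt_left (hf : WeaklyQuasisupermodular f)
    (h : f (x ⊓ y) ⊔ f (x ⊔ y) < f x) : f x ⊓ f y < f (x ⊓ y) ⊓ f (x ⊔ y) := by
  obtain ⟨h_inf, h_sup⟩ := sup_lt_iff.mp h
  exact lt_inf_iff.mpr ⟨(hf x y).2 h_sup, (hf x y).1 h_inf⟩

theorem inf_lt_inf_of_sup_lt_right (hf : WeaklyQuasisupermodular f)
    (h : f (x ⊓ y) ⊔ f (x ⊔ y) < f y) : f x ⊓ f y < f (x ⊓ y) ⊓ f (x ⊔ y) := by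
  rw [inf_comm x y, sup_comm x y] at h ⊢
  rw [inf_comm (f x)]
  exact hf.inf_lt_inf_of_sup_lt_left h

end WeaklyQuasisupermodular

/-- Corollary 2.9: a weakly quasisupermodular map is superextremal. -/
theorem superextremal_of_weaklyQuasisupermodular {X C : Type*} [Lattice X] [LinearOrder C]
    (f : X → C) (hf : WeaklyQuasisupermodular f) : Superextremal f := by
  intro x y
  rw [or_iff_not_imp_left, not_le, lt_sup_iff]
  rintro (hx | hy)
  · exact (hf.inf_lt_inf_of_sup_lt_left hx).le
  · exact (hf.inf_lt_inf_of_sup_lt_right hy).le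
end

section
/- Let X be a nonempty lattice, C a linearly ordered set, and f : X → C a meet-subextremal map. Suppose that for every t ∈ C, the lower level set [f ≤ t] = {x ∈ X : f(x) ≤ t}, with the order induced from X, is chain-complete downwards and, whenever nonempty, has a maximal element. Then the set argmin f of minimizers of f is a nonempty quasisublattice of X (in particular, f attains a minimum on X). -/
/-- A subset `A` of a poset is chain-complete downwards if every nonempty chain
contained in `A` has a greatest lower bound within `A` (in the induced order). -/
def ChainCompleteDownwardsOn {X : Type*} [PartialOrder X] (A : Set X) : Prop :=
  ∀ c : Set X, c ⊆ A → c.Nonempty → IsChain (· ≤ ·) c →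
    ∃ m ∈ A, (∀ x ∈ c, m ≤ x) ∧ ∀ b ∈ A, (∀ x ∈ c, b ≤ x) → b ≤ m

/-- A subset `A` of a poset has a maximal element. -/
def HasMaximalOn {X : Type*} [PartialOrder X] (A : Set X) : Prop :=
  ∃ m ∈ A, ∀ x ∈ A, m ≤ x → x = m

/-- A subset `A` of a lattice is a quasisublattice if for all `x, y ∈ A`, at least
one of `x ⊓ y`, `x ⊔ y` belongs to `A`. -/
def Quasisublattice {X : Type*} [Lattice X] (A : Set X) : Prop :=
  ∀ x ∈ A, ∀ y ∈ A, x ⊓ y ∈ A ∨ x ⊔ y ∈ A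

/-!
Fix a maximal element `m t` of each nonempty level set `A t = [f ≤ t]`. Meet-subextremality makes
`A s` stable under `· ⊓ m t` for `s ≤ t`: otherwise `x ⊔ m t ∈ A t`, so `x ≤ m t` by maximality and
`x ⊓ m t = x`. Let `D s` consist of the elements of `A s` below all `m t` with `t ≥ s`. By Zorn's
lemma there is a minimal element of `A s` among the upper bounds of `D s`; it does not decrease when
met with `m t`, so it is the greatest element of `D s`. As `D s` grows with `s`, these greatest
elements form a monotone selection of the level sets.

By Zorn's lemma again there is a minimal monotone selection `k`. Replacing each `k t` by the infimum
within `A t` of all `k s` with `s ≤ t` gives another monotone selection below `k`, hence `k` itself.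
So `k` is antitone as well, thus constant, and its value lies in every nonempty level set.
-/

theorem HasMaximalOn.exists_maximal {P : Type*} [PartialOrder P] {A : Set P}
    (hA : HasMaximalOn A) : ∃ m, Maximal (· ∈ A) m :=
  let ⟨m, hmA, hm⟩ := hA
  ⟨m, hmA, fun x hx hmx => (hm x hx hmx).le⟩

namespace ChainCompleteDownwardsOn

section PartialOrder

variable {P : Type*} [PartialOrder P] {A : Set P}

theorem exists_isGreatest_inter_lowerBounds (hA : ChainCompleteDownwardsOn A) {c : Set P}
    (hcA : c ⊆ A) (hc₀ : c.Nonempty) (hc : IsChain (· ≤ ·) c) :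
    ∃ m, IsGreatest (A ∩ lowerBounds c) m :=
  let ⟨m, hmA, hmc, hm⟩ := hA c hcA hc₀ hc
  ⟨m, ⟨hmA, hmc⟩, fun b hb => hm b hb.1 hb.2⟩

theorem exists_minimal (hA : ChainCompleteDownwardsOn A) (hA₀ : A.Nonempty) :
    ∃ m, Minimal (· ∈ A) m := by
  obtain ⟨x, hx⟩ := hA₀
  obtain ⟨m, -, hm⟩ := zorn_le_nonempty₀ (α := Pᵒᵈ) A
    (fun c hcA hc y hy =>
      let ⟨m, hmA, hmc, _⟩ := hA c hcA ⟨y, hy⟩ hc.symm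
      ⟨m, hmA, hmc⟩) x hx
  exact ⟨m, hm⟩

theorem inter_upperBounds (hA : ChainCompleteDownwardsOn A) {D : Set P} (hD : D ⊆ A) :
    ChainCompleteDownwardsOn (A ∩ upperBounds D) := by
  intro c hcA hc₀ hc
  obtain ⟨m, hmA, hmc, hm⟩ := hA c (fun _ hx => (hcA hx).1) hc₀ hc
  exact ⟨m, ⟨hmA, fun d hd => hm d (hD hd) fun x hx => (hcA hx).2 hd⟩, hmc,
    fun b hb => hm b hb.1⟩

end PartialOrder

theorem exists_isGreatest_inter_lowerBounds_of_inf_mem {P : Type*} [SemilatticeInf P]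
    {A M : Set P} (hA : ChainCompleteDownwardsOn A) (hAM : (A ∩ M).Nonempty)
    (hinf : ∀ x ∈ A, ∀ m ∈ M, x ⊓ m ∈ A) : ∃ g, IsGreatest (A ∩ lowerBounds M) g := by
  obtain ⟨m₀, hm₀A, hm₀M⟩ := hAM
  obtain ⟨g, ⟨hgA, hgub⟩, hgmin⟩ :=
    (hA.inter_upperBounds (D := A ∩ lowerBounds M) Set.inter_subset_left).exists_minimal
      ⟨m₀, hm₀A, fun _ hy => hy.2 hm₀M⟩
  have hglb : g ∈ lowerBounds M := fun m hm =>
    le_inf_iff.mp (hgmin ⟨hinf g hgA m hm, fun _ hy => le_inf (hgub hy) (hy.2 hm)⟩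
      inf_le_left) |>.2
  exact ⟨g, ⟨hgA, hglb⟩, hgub⟩

end ChainCompleteDownwardsOn

/-- The monotone selections of a family `A` of sets: the monotone maps `k` with `k i ∈ A i` for
all `i`. They carry the pointwise order, in which a minimal one is sought. -/
def monotoneSelections {ι P : Type*} [Preorder ι] [Preorder P] (A : ι → Set P) : Set (ι → P) :=
  {k | Monotone k ∧ ∀ i, k i ∈ A i}

section Selections

variable {ι P : Type*}

theorem chainCompleteDownwardsOn_monotoneSelections [Preorder ι] [PartialOrder P]
    {A : ι → Set P} (hmono : Monotone A) (hA : ∀ i, ChainCompleteDownwardsOn (A i)) :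
    ChainCompleteDownwardsOn (monotoneSelections A) := by
  intro c hcA hc₀ hc
  have hinf (i : ι) : ∃ w, IsGreatest (A i ∩ lowerBounds (Function.eval i '' c)) w :=
    (hA i).exists_isGreatest_inter_lowerBounds
      (Set.image_subset_iff.mpr fun _ hk => (hcA hk).2 i) (hc₀.image _)
      ((Function.monotone_eval i).isChain_image hc)
  choose w hw using hinf
  have hwc : ∀ k ∈ c, w ≤ k := fun k hk i => (hw i).1.2 (Set.mem_image_of_mem _ hk)
  refine ⟨w, ⟨fun i j hij => ?_, fun i => (hw i).1.1⟩, hwc, fun b hb hbc i => ?_⟩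
  · refine (hw j).2 ⟨hmono hij (hw i).1.1, Set.forall_mem_image.mpr fun k hk => ?_⟩
    exact (hwc k hk i).trans ((hcA hk).1 hij)
  · exact (hw i).2 ⟨hb.2 i, Set.forall_mem_image.mpr fun k hk => hbc k hk i⟩

theorem exists_mem_monotoneSelections_forall_le [LinearOrder ι] [PartialOrder P]
    {A : ι → Set P} (hmono : Monotone A) (hA : ∀ i, ChainCompleteDownwardsOn (A i))
    {k : ι → P} (hk : k ∈ monotoneSelections A) :
    ∃ w ∈ monotoneSelections A, ∀ i, ∀ j ≤ i, w i ≤ k j := by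
  have hinf (i : ι) : ∃ w, IsGreatest (A i ∩ lowerBounds (k '' Set.Iic i)) w :=
    (hA i).exists_isGreatest_inter_lowerBounds
      (Set.image_subset_iff.mpr fun j hj => hmono hj (hk.2 j)) (Set.nonempty_Iic.image k)
      (hk.1.isChain_image (isChain_of_trichotomous _))
  choose w hw using hinf
  have hwk (i j : ι) (hj : j ≤ i) : w i ≤ k j := (hw i).1.2 (Set.mem_image_of_mem k hj)
  refine ⟨w, ⟨fun i j hij => ?_, fun i => (hw i).1.1⟩, hwk⟩
  refine (hw j).2 ⟨hmono hij (hw i).1.1, Set.forall_mem_image.mpr fun s _ => ?_⟩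
  rcases le_total s i with hsi | his
  · exact hwk i s hsi
  · exact (hwk i i le_rfl).trans (hk.1 his)

theorem nonempty_iInter_of_nonempty_monotoneSelections [Nonempty ι] [LinearOrder ι]
    [PartialOrder P] {A : ι → Set P} (hmono : Monotone A)
    (hA : ∀ i, ChainCompleteDownwardsOn (A i)) (hsel : (monotoneSelections A).Nonempty) :
    (⋂ i, A i).Nonempty := by
  obtain ⟨k, hk, hkmin⟩ :=
    (chainCompleteDownwardsOn_monotoneSelections hmono hA).exists_minimal hsel
  obtain ⟨w, hw, hwk⟩ := exists_mem_monotoneSelections_forall_le hmono hA hk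
  have hkw : k ≤ w := hkmin hw fun i => hwk i i le_rfl
  have hanti : Antitone k := fun j i hji => (hkw i).trans (hwk i j hji)
  obtain ⟨i₀⟩ := ‹Nonempty ι›
  exact ⟨k i₀, Set.mem_iInter.mpr fun i =>
    constant_of_monotone_antitone hk.1 hanti i₀ i ▸ hk.2 i⟩

theorem nonempty_monotoneSelections_of_inf_mem [Preorder ι] [SemilatticeInf P]
    {A : ι → Set P} (hmono : Monotone A) (hA : ∀ i, ChainCompleteDownwardsOn (A i))
    {m : ι → P} (hm : ∀ i, m i ∈ A i) (hinf : ∀ i j, i ≤ j → ∀ x ∈ A i, x ⊓ m j ∈ A i) :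
    (monotoneSelections A).Nonempty := by
  have hgreatest (i : ι) : ∃ g, IsGreatest (A i ∩ lowerBounds (m '' Set.Ici i)) g :=
    (hA i).exists_isGreatest_inter_lowerBounds_of_inf_mem
      ⟨m i, hm i, Set.mem_image_of_mem m Set.self_mem_Ici⟩
      fun x hx => Set.forall_mem_image.mpr fun j hij => hinf i j hij x hx
  choose g hg using hgreatest
  refine ⟨g, fun i j hij => (hg i).mono (hg j) ?_, fun i => (hg i).1.1⟩
  exact Set.inter_subset_inter (hmono hij)
    (lowerBounds_mono_set (Set.image_mono (Set.Ici_subset_Ici.mpr hij)))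

end Selections

namespace MeetSubextremal

variable {X C : Type*} [Lattice X] [LinearOrder C] {f : X → C}

theorem quasisublattice_argmin (hf : MeetSubextremal f) :
    Quasisublattice {x : X | ∀ y : X, f x ≤ f y} := fun x hx y hy =>
  (hf x y).imp (fun h z => h.trans (hx z)) fun h z => h.trans (sup_le (hx z) (hy z))

theorem apply_inf_le_of_maximal (hf : MeetSubextremal f) {t : C} {x m : X} (hx : f x ≤ t)
    (hm : Maximal (f · ≤ t) m) : f (x ⊓ m) ≤ f x := by
  refine (hf x m).elim id fun hsup => ?_
  have hxm : x ≤ m := le_sup_left.trans (hm.2 (hsup.trans (sup_le hx hm.1)) le_sup_right)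
  rw [inf_eq_left.mpr hxm]

end MeetSubextremal

/-- Theorem 3.3: if `f : X → C` is meet-subextremal from a nonempty lattice to a chain
and every lower level set `[f ≤ t]` is chain-complete downwards and (when nonempty)
admits a maximal element, then `argmin f` is a nonempty quasisublattice of `X`. -/
theorem argmin_nonempty_quasisublattice_of_meetSubextremal {X C : Type*} [Lattice X]
    [Nonempty X] [LinearOrder C] (f : X → C) (hf : MeetSubextremal f)
    (hcc : ∀ t : C, ChainCompleteDownwardsOn {x : X | f x ≤ t})
    (hmax : ∀ t : C, ({x : X | f x ≤ t}).Nonempty → HasMaximalOn {x : X | f x ≤ t}) :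
    ({x : X | ∀ y : X, f x ≤ f y}).Nonempty ∧ Quasisublattice {x : X | ∀ y : X, f x ≤ f y} := by
  refine ⟨?_, hf.quasisublattice_argmin⟩
  let A (t : Set.range f) : Set X := {x | f x ≤ t}
  have hmono : Monotone A := fun _ _ hst _ hx => le_trans hx hst
  have hA (t : Set.range f) : ChainCompleteDownwardsOn (A t) := hcc t
  have hAmax (t : Set.range f) : ∃ m, Maximal (f · ≤ t) m :=
    let ⟨_, x, hx⟩ := t
    (hmax _ ⟨x, hx.le⟩).exists_maximal
  choose m hm using hAmax
  have hsel : (monotoneSelections A).Nonempty :=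
    nonempty_monotoneSelections_of_inf_mem hmono hA (fun t => (hm t).1) fun _ t hst x hx =>
      (hf.apply_inf_le_of_maximal (hx.trans hst) (hm t)).trans hx
  obtain ⟨x, hx⟩ := nonempty_iInter_of_nonempty_monotoneSelections hmono hA hsel
  exact ⟨x, fun y => Set.mem_iInter.mp hx ⟨f y, y, rfl⟩⟩
end

section
/- Let X be a nonempty lattice, C a linearly ordered set, and f : X → C a join-subextremal map. Suppose that for every t ∈ C, the lower level set [f ≤ t] = {x ∈ X : f(x) ≤ t}, with the order induced from X, is chain-complete upwards and, whenever nonempty, has a minimal element. Then the set argmin f of minimizers of f is a nonempty quasisublattice of X. -/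
/-- A subset `A` of a poset is chain-complete upwards if every nonempty chain
contained in `A` has a least upper bound within `A` (in the induced order). -/
def ChainCompleteUpwardsOn {X : Type*} [PartialOrder X] (A : Set X) : Prop :=
  ∀ c : Set X, c ⊆ A → c.Nonempty → IsChain (· ≤ ·) c →
    ∃ m ∈ A, (∀ x ∈ c, x ≤ m) ∧ ∀ b ∈ A, (∀ x ∈ c, x ≤ b) → m ≤ b

/-- A subset `A` of a poset has a minimal element. -/
def HasMinimalOn {X : Type*} [PartialOrder X] (A : Set X) : Prop :=
  ∃ m ∈ A, ∀ x ∈ A, x ≤ m → x = m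

/-! A minimal element `a` of a level set `[f ≤ t]` acts on the lower level sets: join-subextremality
gives `f (a ⊔ y) ≤ f y` whenever `f y ≤ t`, since the other alternative forces `a ≤ y`.
So, picking a minimal element `a s` of each level set, the elements `a s` with `t ≤ s` have a
supremum relative to `[f ≤ t]`, and these suprema grow as `t` decreases. A maximal choice `m` of
points `m t ∈ [f ≤ t]` with this monotonicity is constant, because the supremum of the chain of all
`m s` relative to each `[f ≤ t]` would otherwise enlarge it; its value minimizes `f`. -/

theorem HasMinimalOn.exists_minimal {X : Type*} [PartialOrder X] {A : Set X}
    (hA : HasMinimalOn A) : ∃ a, Minimal (· ∈ A) a := by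
  obtain ⟨a, ha, hmin⟩ := hA
  exact ⟨a, ha, fun x hx hxa => (hmin x hx hxa).ge⟩

namespace ChainCompleteUpwardsOn

section PartialOrder

variable {X : Type*} [PartialOrder X] {A : Set X}

theorem exists_isLeast_inter_upperBounds (hA : ChainCompleteUpwardsOn A) {c : Set X} (hcA : c ⊆ A)
    (hne : c.Nonempty) (hc : IsChain (· ≤ ·) c) : ∃ m, IsLeast (A ∩ upperBounds c) m := by
  obtain ⟨m, hmA, hub, hleast⟩ := hA c hcA hne hc
  exact ⟨m, ⟨hmA, hub⟩, fun b hb => hleast b hb.1 hb.2⟩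

theorem exists_maximal (hA : ChainCompleteUpwardsOn A) (hne : A.Nonempty) :
    ∃ m, Maximal (· ∈ A) m := by
  obtain ⟨x, hx⟩ := hne
  obtain ⟨m, -, hm⟩ := zorn_le_nonempty₀ A (fun c hcA hc y hy =>
    let ⟨z, hz, _⟩ := hA.exists_isLeast_inter_upperBounds hcA ⟨y, hy⟩ hc
    ⟨z, hz.1, hz.2⟩) x hx
  exact ⟨m, hm⟩

theorem inter_lowerBounds (hA : ChainCompleteUpwardsOn A) {B : Set X} (hBA : B ⊆ A) :
    ChainCompleteUpwardsOn (A ∩ lowerBounds B) := by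
  intro c hcAB hne hc
  obtain ⟨m, ⟨hmA, hub⟩, hleast⟩ :=
    hA.exists_isLeast_inter_upperBounds (fun z hz => (hcAB hz).1) hne hc
  have hmB : m ∈ lowerBounds B := fun b hb => hleast ⟨hBA hb, fun z hz => (hcAB hz).2 hb⟩
  exact ⟨m, ⟨hmA, hmB⟩, hub, fun b hbA hb => hleast ⟨hbA.1, hb⟩⟩

end PartialOrder

theorem exists_isLeast_inter_upperBounds_of_sup_mem {X : Type*} [SemilatticeSup X] {A S : Set X}
    (hA : ChainCompleteUpwardsOn A) (hne : (A ∩ S).Nonempty)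
    (hsup : ∀ s ∈ S, ∀ y ∈ A, s ⊔ y ∈ A) : ∃ b, IsLeast (A ∩ upperBounds S) b := by
  obtain ⟨x, hxA, hxS⟩ := hne
  have hcc : ChainCompleteUpwardsOn (A ∩ lowerBounds (A ∩ upperBounds S)) :=
    hA.inter_lowerBounds Set.inter_subset_left
  obtain ⟨b, hb⟩ := hcc.exists_maximal ⟨x, hxA, fun _ hz => hz.2 hxS⟩
  refine ⟨b, ⟨hb.prop.1, fun s hs => ?_⟩, hb.prop.2⟩
  have hsb : s ⊔ b ∈ A ∩ lowerBounds (A ∩ upperBounds S) :=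
    ⟨hsup s hs b hb.prop.1, fun _ hz => sup_le (hz.2 hs) (hb.prop.2 hz)⟩
  exact le_sup_left.trans (hb.le_of_ge hsb le_sup_right)

end ChainCompleteUpwardsOn

/-- The antitone choice functions of a family of subsets of a poset, as a subset of the poset of
all functions with the pointwise order. Their maximal elements are used to find a point common to
all members of a nested family. -/
def AntitoneSelections {ι X : Type*} [Preorder ι] [Preorder X] (L : ι → Set X) : Set (ι → X) :=
  {m | Antitone m ∧ ∀ i, m i ∈ L i}

namespace AntitoneSelections

theorem nonempty_of_sup_mem {ι X : Type*} [Preorder ι] [SemilatticeSup X] {L : ι → Set X}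
    (hL : Monotone L) (hcc : ∀ i, ChainCompleteUpwardsOn (L i)) {a : ι → X}
    (ha : ∀ i, a i ∈ L i) (hsup : ∀ ⦃i j⦄, i ≤ j → ∀ y ∈ L i, a j ⊔ y ∈ L i) :
    (AntitoneSelections L).Nonempty := by
  have hleast (i : ι) : ∃ b, IsLeast (L i ∩ upperBounds (a '' Set.Ici i)) b :=
    (hcc i).exists_isLeast_inter_upperBounds_of_sup_mem ⟨a i, ha i, i, le_rfl, rfl⟩
      (Set.forall_mem_image.2 fun _ hj => hsup hj)
  choose b hb using hleast
  refine ⟨b, fun i j hij => (hb j).2 ⟨hL hij (hb i).1.1, ?_⟩, fun i => (hb i).1.1⟩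
  exact upperBounds_mono_set (Set.image_mono (Set.Ici_subset_Ici.2 hij)) (hb i).1.2

theorem chainCompleteUpwardsOn {ι X : Type*} [Preorder ι] [PartialOrder X] {L : ι → Set X}
    (hL : Monotone L) (hcc : ∀ i, ChainCompleteUpwardsOn (L i)) :
    ChainCompleteUpwardsOn (AntitoneSelections L) := by
  intro c hcL hne hc
  have hleast (i : ι) : ∃ u, IsLeast (L i ∩ upperBounds (Function.eval i '' c)) u :=
    (hcc i).exists_isLeast_inter_upperBounds (Set.image_subset_iff.2 fun _ hg => (hcL hg).2 i)
      (hne.image _) ((Function.monotone_eval i).isChain_image hc)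
  choose u hu using hleast
  have hub : u ∈ upperBounds c := fun g hg i => (hu i).1.2 ⟨g, hg, rfl⟩
  refine ⟨u, ⟨fun i j hij => (hu j).2 ⟨hL hij (hu i).1.1, ?_⟩, fun i => (hu i).1.1⟩, hub, ?_⟩
  · exact Set.forall_mem_image.2 fun g hg => ((hcL hg).1 hij).trans (hub hg i)
  · exact fun g hg hgc i => (hu i).2 ⟨hg.2 i, Set.forall_mem_image.2 fun h hh => hgc h hh i⟩

section LinearOrder

variable {ι X : Type*} [LinearOrder ι] [PartialOrder X] {L : ι → Set X}

theorem exists_forall_le (hL : Monotone L) (hcc : ∀ i, ChainCompleteUpwardsOn (L i)) {m : ι → X}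
    (hm : m ∈ AntitoneSelections L) : ∃ u ∈ AntitoneSelections L, ∀ i j, m i ≤ u j := by
  have hleast (i : ι) : ∃ u, IsLeast (L i ∩ upperBounds (m '' Set.Iic i)) u :=
    (hcc i).exists_isLeast_inter_upperBounds (Set.image_subset_iff.2 fun j hj => hL hj (hm.2 j))
      (Set.nonempty_Iic.image m) (hm.1.isChain_range.mono (Set.image_subset_range m _))
  choose u hu using hleast
  have hle (i j : ι) : m i ≤ u j :=
    (hm.1 (min_le_left i j)).trans ((hu j).1.2 ⟨min i j, min_le_right i j, rfl⟩)
  refine ⟨u, ⟨fun i j hij => (hu j).2 ⟨hL hij (hu i).1.1, ?_⟩, fun i => (hu i).1.1⟩, hle⟩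
  exact Set.forall_mem_image.2 fun k _ => hle k i

theorem nonempty_iInter [Nonempty ι] (hL : Monotone L) (hcc : ∀ i, ChainCompleteUpwardsOn (L i))
    (hne : (AntitoneSelections L).Nonempty) : (⋂ i, L i).Nonempty := by
  obtain ⟨m, hm⟩ := (chainCompleteUpwardsOn hL hcc).exists_maximal hne
  obtain ⟨u, hu, hmu⟩ := exists_forall_le hL hcc hm.prop
  have hum : u ≤ m := hm.le_of_ge hu fun i => hmu i i
  have hconst (i j : ι) : m i = m j :=
    le_antisymm ((hmu i j).trans (hum j)) ((hmu j i).trans (hum i))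
  inhabit ι
  exact ⟨m default, Set.mem_iInter.2 fun i => hconst i default ▸ hm.prop.2 i⟩

end LinearOrder

end AntitoneSelections

namespace JoinSubextremal

variable {X C : Type*} [Lattice X] [LinearOrder C] {f : X → C}

theorem quasisublattice_preimage (hf : JoinSubextremal f) {s : Set C} (hs : IsLowerSet s) :
    Quasisublattice (f ⁻¹' s) := by
  intro x hx y hy
  have hxy : f x ⊔ f y ∈ s := sup_ind (p := (· ∈ s)) _ _ hx hy
  exact (hf x y).imp (hs · hxy) (hs · hx)

theorem apply_sup_le_of_minimal (hf : JoinSubextremal f) {t : C} {a y : X}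
    (ha : Minimal (f · ≤ t) a) (hy : f y ≤ t) : f (a ⊔ y) ≤ f y := by
  rcases hf y a with hinf | hsup
  · have hay : a ≤ y ⊓ a := ha.le_of_le (hinf.trans (sup_le hy ha.prop)) inf_le_right
    rw [sup_eq_right.2 (hay.trans inf_le_left)]
  · rwa [sup_comm]

end JoinSubextremal

/-- Corollary 3.5 (1): if `f : X → C` is join-subextremal from a nonempty lattice to a
chain and every lower level set `[f ≤ t]` is chain-complete upwards and (when nonempty)
admits a minimal element, then `argmin f` is a nonempty quasisublattice of `X`. -/
theorem argmin_nonempty_quasisublattice_of_joinSubextremal {X C : Type*} [Lattice X]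
    [Nonempty X] [LinearOrder C] (f : X → C) (hf : JoinSubextremal f)
    (hcc : ∀ t : C, ChainCompleteUpwardsOn {x : X | f x ≤ t})
    (hmin : ∀ t : C, ({x : X | f x ≤ t}).Nonempty → HasMinimalOn {x : X | f x ≤ t}) :
    ({x : X | ∀ y : X, f x ≤ f y}).Nonempty ∧ Quasisublattice {x : X | ∀ y : X, f x ≤ f y} := by
  constructor
  · let L (t : Set.range f) : Set X := {x | f x ≤ t}
    have hL : Monotone L := fun _ _ hst _ hx => le_trans hx hst
    have hexists (t : Set.range f) : ∃ a, Minimal (· ∈ L t) a :=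
      (hmin t (t.2.imp fun _ hx => hx.le)).exists_minimal
    choose a ha using hexists
    have hsup ⦃s t : Set.range f⦄ (hst : s ≤ t) (y : X) (hy : y ∈ L s) : a t ⊔ y ∈ L s :=
      (hf.apply_sup_le_of_minimal (ha t) (hL hst hy)).trans hy
    have hsel := AntitoneSelections.nonempty_of_sup_mem hL (hcc ·) (fun t => (ha t).prop) hsup
    obtain ⟨x, hx⟩ := AntitoneSelections.nonempty_iInter hL (hcc ·) hsel
    exact ⟨x, fun y => Set.mem_iInter.1 hx ⟨f y, y, rfl⟩⟩
  · have hargmin : {x | ∀ y, f x ≤ f y} = f ⁻¹' lowerBounds (Set.range f) :=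
      Set.ext fun _ => Set.forall_mem_range.symm
    rw [hargmin]
    exact hf.quasisublattice_preimage fun _ _ hst hs => lowerBounds_mono_mem hst hs
end

section
/- Let X be a nonempty lattice, C a linearly ordered set, and f : X → C a meet-superextremal map. Suppose that for every t ∈ C, the upper level set [f ≥ t] = {x ∈ X : f(x) ≥ t}, with the order induced from X, is chain-complete downwards and, whenever nonempty, has a maximal element. Then the set argmax f of maximizers of f is a nonempty quasisublattice of X. -/
/-!
For each value `t` of `f`, consider the points `p` of `[f ≥ t]` such that `f y ≤ f (y ⊓ p)` for all
`y` in `[f ≥ t]`. By superextremality, maximal elements of `[f ≥ t]` are such points, and the meet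
of such a point with one for a lower level is again such a point. A chain-complete set contains the
infimum of each of its nonempty meet-closed subsets: by induction on cardinality, an infinite set
being the union of a chain of smaller sets. So these points have an infimum in `[f ≥ t]`, and it is
antitone in `t`.

Among the antitone choices of a point in each `[f ≥ t]`, Zorn's lemma provides a minimal one, `g`.
The infimum of the range of `g`, taken in `[f ≥ t]`, is antitone in `t` and lies below every value
of `g`; by minimality `g` is constant. Its value lies in every level set, hence maximizes `f`.
-/

open Set Cardinal

universe u

theorem exists_monotone_iUnion_eq_and_mk_lt {α : Type u} {S : Set α} (hS : S.Infinite) :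
    ∃ T : (#S).ord.ToType → Set α,
      Monotone T ∧ ⋃ i, T i = S ∧ ∀ i, (T i).Nonempty ∧ #(T i) < #S := by
  obtain ⟨e⟩ : Nonempty ((#S).ord.ToType ≃ S) := Cardinal.eq.1 (mk_ord_toType _)
  have hS' : ℵ₀ ≤ #S := infinite_iff.1 hS.to_subtype
  refine ⟨fun i => (fun j => (e j : α)) '' Iic i, fun i j hij => image_mono (Iic_subset_Iic.2 hij),
    ?_, fun i => ⟨nonempty_Iic.image _, mk_image_le.trans_lt ?_⟩⟩
  · rw [← image_iUnion, iUnion_Iic, image_univ]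
    exact (e.surjective.range_comp Subtype.val).trans Subtype.range_coe
  · simpa using mk_Iic_lt i (by simp) (by simpa using hS')

namespace ChainCompleteDownwardsOn

variable {X : Type u} [PartialOrder X] {A : Set X}

theorem exists_isGreatest (hA : ChainCompleteDownwardsOn A) {K : Set X} (hKA : K ⊆ A)
    (hne : K.Nonempty) (hK : IsChain (· ≤ ·) K) : ∃ m, IsGreatest (A ∩ lowerBounds K) m := by
  obtain ⟨m, hmA, hmK, hm⟩ := hA K hKA hne hK
  exact ⟨m, ⟨hmA, hmK⟩, fun b hb => hm b hb.1 hb.2⟩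

theorem exists_isGreatest_iUnion (hA : ChainCompleteDownwardsOn A) {ι : Type*} [LinearOrder ι]
    [Nonempty ι] {T : ι → Set X} (hT : Monotone T)
    (h : ∀ i, ∃ m, IsGreatest (A ∩ lowerBounds (T i)) m) :
    ∃ m, IsGreatest (A ∩ lowerBounds (⋃ i, T i)) m := by
  choose g hg using h
  have hg_anti : Antitone g := fun i j hij =>
    (hg j).mono (hg i) (inter_subset_inter_right A (lowerBounds_mono_set (hT hij)))
  have hlower : A ∩ lowerBounds (⋃ i, T i) = A ∩ lowerBounds (range g) := by
    ext b
    refine and_congr_right fun hb => ?_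
    simp only [lowerBounds_iUnion, mem_iInter, mem_lowerBounds, forall_mem_range]
    exact forall_congr' fun i =>
      ⟨fun hbi => (hg i).2 ⟨hb, hbi⟩, fun hbi x hx => hbi.trans ((hg i).1.2 hx)⟩
  rw [hlower]
  exact hA.exists_isGreatest (range_subset_iff.2 fun i => (hg i).1.1) (range_nonempty g)
    hg_anti.isChain_range

theorem exists_isGreatest_of_finite (hA : ChainCompleteDownwardsOn A) {S : Set X}
    (hne : S.Nonempty)
    (hfin : ∀ T ⊆ S, T.Nonempty → T.Finite → ∃ m, IsGreatest (A ∩ lowerBounds T) m) :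
    ∃ m, IsGreatest (A ∩ lowerBounds S) m := by
  induction hκ : #S using WellFoundedLT.induction generalizing S with
  | ind κ ih =>
    subst hκ
    by_cases hS : S.Finite
    · exact hfin S Subset.rfl hne hS
    obtain ⟨T, hTmono, hTS, hT⟩ := exists_monotone_iUnion_eq_and_mk_lt hS
    have hT_sub (i) : T i ⊆ S := hTS ▸ subset_iUnion T i
    have : Nonempty (#S).ord.ToType := (nonempty_iUnion.1 (hTS ▸ hne)).nonempty
    rw [← hTS]
    exact hA.exists_isGreatest_iUnion hTmono fun i =>
      ih _ (hT i).2 (hT i).1 (fun U hU => hfin U (hU.trans (hT_sub i))) rfl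

end ChainCompleteDownwardsOn

theorem ChainCompleteDownwardsOn.exists_isGreatest_of_infClosed {X : Type*} [SemilatticeInf X]
    {A F : Set X} (hA : ChainCompleteDownwardsOn A) (hFA : F ⊆ A) (hne : F.Nonempty)
    (hF : InfClosed F) : ∃ m, IsGreatest (A ∩ lowerBounds F) m := by
  refine hA.exists_isGreatest_of_finite hne fun T hTF hTne hTfin => ?_
  lift T to Finset X using hTfin
  refine ⟨T.inf' hTne id, ⟨hFA (hF.finsetInf'_mem hTne hTF), fun x hx => T.inf'_le id hx⟩, ?_⟩
  exact fun b hb => Finset.le_inf' _ _ hb.2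

section AntitoneSelection

variable {ι X : Type*}

/-- The antitone choice functions of a family of subsets of `X`. They are compared pointwise. -/
def antitoneSelections [Preorder ι] [Preorder X] (A : ι → Set X) : Set (ι → X) :=
  {g | Antitone g ∧ ∀ i, g i ∈ A i}

theorem exists_antitoneSelection_lowerBounds [Preorder ι] [Preorder X] {A K : ι → Set X}
    (hA : Antitone A)
    (hmax : ∀ i, ∃ m, IsGreatest (A i ∩ lowerBounds (K i)) m)
    (hK : ∀ ⦃i j⦄, i ≤ j → A j ∩ lowerBounds (K j) ⊆ lowerBounds (K i)) :
    ∃ g ∈ antitoneSelections A, ∀ i, g i ∈ lowerBounds (K i) := by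
  choose g hg using hmax
  exact ⟨g, ⟨fun i j hij => (hg j).mono (hg i) fun b hb => ⟨hA hij hb.1, hK hij hb⟩,
    fun i => (hg i).1.1⟩, fun i => (hg i).1.2⟩

variable [PartialOrder X]

theorem exists_antitoneSelection_le_of_isChain [Preorder ι] {A : ι → Set X} (hA : Antitone A)
    (hcc : ∀ i, ChainCompleteDownwardsOn (A i)) {𝒢 : Set (ι → X)}
    (h𝒢A : 𝒢 ⊆ antitoneSelections A) (hne : 𝒢.Nonempty) (h𝒢 : IsChain (· ≤ ·) 𝒢) :
    ∃ h ∈ antitoneSelections A, ∀ g ∈ 𝒢, h ≤ g := by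
  have hinf (i) : ∃ m, IsGreatest (A i ∩ lowerBounds (Function.eval i '' 𝒢)) m :=
    (hcc i).exists_isGreatest (image_subset_iff.2 fun g hg => (h𝒢A hg).2 i) (hne.image _)
      (h𝒢.image_of_map_rel _ _ _ fun _ _ hgh => hgh i)
  obtain ⟨h, hhA, hh⟩ := exists_antitoneSelection_lowerBounds hA hinf fun i j hij b hb =>
    forall_mem_image.2 fun g hg => (hb.2 (mem_image_of_mem _ hg)).trans ((h𝒢A hg).1 hij)
  exact ⟨h, hhA, fun g hg i => hh i (mem_image_of_mem _ hg)⟩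

theorem exists_antitoneSelection_mem_lowerBounds_range [LinearOrder ι] {A : ι → Set X}
    (hA : Antitone A) (hcc : ∀ i, ChainCompleteDownwardsOn (A i)) {g : ι → X}
    (hg : g ∈ antitoneSelections A) :
    ∃ h ∈ antitoneSelections A, ∀ i, h i ∈ lowerBounds (range g) := by
  refine exists_antitoneSelection_lowerBounds hA (fun i => ?_) fun _ _ _ _ hb => hb.2
  have htail : lowerBounds (g '' Ici i) = lowerBounds (range g) := by
    refine Subset.antisymm (fun b hb => forall_mem_range.2 fun j => ?_)
      (lowerBounds_mono_set (image_subset_range g _))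
    exact (hb (mem_image_of_mem g (le_max_left i j))).trans (hg.1 (le_max_right i j))
  rw [← htail]
  exact (hcc i).exists_isGreatest (image_subset_iff.2 fun j hij => hA hij (hg.2 j))
    (nonempty_Ici.image g) (hg.1.isChain_image (isChain_of_trichotomous _))

theorem exists_minimal_antitoneSelection [Preorder ι] {A : ι → Set X} (hA : Antitone A)
    (hcc : ∀ i, ChainCompleteDownwardsOn (A i)) (hne : (antitoneSelections A).Nonempty) :
    ∃ g, Minimal (· ∈ antitoneSelections A) g := by
  obtain ⟨g₀, hg₀⟩ := hne
  obtain ⟨g, -, hg⟩ := zorn_le_nonempty₀ (α := (ι → X)ᵒᵈ) (antitoneSelections A)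
    (fun 𝒢 h𝒢A h𝒢 g hg => exists_antitoneSelection_le_of_isChain hA hcc h𝒢A ⟨g, hg⟩ h𝒢.symm) g₀ hg₀
  exact ⟨g, hg⟩

theorem nonempty_iInter_of_antitoneSelections_nonempty [LinearOrder ι] [Nonempty ι]
    {A : ι → Set X} (hA : Antitone A) (hcc : ∀ i, ChainCompleteDownwardsOn (A i))
    (hne : (antitoneSelections A).Nonempty) : (⋂ i, A i).Nonempty := by
  obtain ⟨g, hg⟩ := exists_minimal_antitoneSelection hA hcc hne
  obtain ⟨h, hhA, hh⟩ := exists_antitoneSelection_mem_lowerBounds_range hA hcc hg.prop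
  have hgh : g ≤ h := hg.le_of_le hhA fun i => hh i (mem_range_self i)
  have hconst (i j) : g i ≤ g j := (hgh i).trans (hh i (mem_range_self j))
  obtain ⟨i⟩ := ‹Nonempty ι›
  exact ⟨g i, mem_iInter.2 fun j => (hconst i j).antisymm (hconst j i) ▸ hg.prop.2 j⟩

end AntitoneSelection

section InfRaising

variable {X C : Type*}

/-- The points `p` of the level set `[f ≥ t]` such that `y ↦ y ⊓ p` does not decrease the value of
`f` on `[f ≥ t]`: a substitute for the maximal elements of `[f ≥ t]` that is closed under meets. -/
def infRaising [SemilatticeInf X] [Preorder C] (f : X → C) (t : C) : Set X :=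
  {p | t ≤ f p ∧ ∀ y, t ≤ f y → f y ≤ f (y ⊓ p)}

theorem inf_mem_infRaising [SemilatticeInf X] [Preorder C] {f : X → C} {s t : C} (hst : s ≤ t)
    {p q : X} (hp : p ∈ infRaising f s) (hq : q ∈ infRaising f t) : q ⊓ p ∈ infRaising f t := by
  refine ⟨hq.1.trans (hp.2 q (hst.trans hq.1)), fun y hy => ?_⟩
  have hyq : f y ≤ f (y ⊓ q) := hq.2 y hy
  calc
    f y ≤ f (y ⊓ q) := hyq
    _ ≤ f (y ⊓ q ⊓ p) := hp.2 _ (hst.trans (hy.trans hyq))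
    _ = f (y ⊓ (q ⊓ p)) := by rw [inf_assoc]

theorem MeetSuperextremal.mem_infRaising_of_maximal [Lattice X] [LinearOrder C] {f : X → C}
    (hf : MeetSuperextremal f) {t : C} {m : X} (hm : Maximal (t ≤ f ·) m) :
    m ∈ infRaising f t := by
  refine ⟨hm.prop, fun y hy => (hf y m).elim id fun hsup => ?_⟩
  have hym : y ≤ m :=
    le_sup_left.trans (hm.le_of_ge ((le_inf hy hm.prop).trans hsup) le_sup_right)
  rw [inf_eq_left.2 hym]

theorem antitone_levelSets [Preorder C] (f : X → C) (I : Set C) :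
    Antitone fun t : I => {x | t ≤ f x} :=
  fun _ _ hst _ hx => le_trans hst hx

theorem antitoneSelections_levelSets_nonempty [SemilatticeInf X] [Preorder C] {f : X → C}
    {I : Set C} (hcc : ∀ t ∈ I, ChainCompleteDownwardsOn {x | t ≤ f x})
    (hne : ∀ t ∈ I, (infRaising f t).Nonempty) :
    (antitoneSelections fun t : I => {x | t ≤ f x}).Nonempty := by
  have hinf (t : I) : ∃ m, IsGreatest ({x | t ≤ f x} ∩ lowerBounds (infRaising f t)) m :=
    (hcc t t.2).exists_isGreatest_of_infClosed (fun p hp => hp.1) (hne t t.2)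
      fun p hp q hq => inf_mem_infRaising le_rfl hq hp
  have hlower ⦃s t : I⦄ (hst : s ≤ t) :
      {x | t ≤ f x} ∩ lowerBounds (infRaising f t) ⊆ lowerBounds (infRaising f s) := by
    intro b hb p hp
    obtain ⟨q, hq⟩ := hne t t.2
    exact (hb.2 (inf_mem_infRaising (Subtype.coe_le_coe.2 hst) hp hq)).trans inf_le_right
  obtain ⟨g, hg, -⟩ := exists_antitoneSelection_lowerBounds (antitone_levelSets f I) hinf hlower
  exact ⟨g, hg⟩

end InfRaising

theorem MeetSuperextremal.quasisublattice_argmax {X C : Type*} [Lattice X] [LinearOrder C]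
    {f : X → C} (hf : MeetSuperextremal f) : Quasisublattice {x | ∀ y, f y ≤ f x} :=
  fun x hx y hy => (hf x y).imp (fun hinf z => (hx z).trans hinf)
    fun hsup z => (le_inf (hx z) (hy z)).trans hsup

/-- Corollary 3.5 (2): if `f : X → C` is meet-superextremal from a nonempty lattice to a
chain and every upper level set `[f ≥ t]` is chain-complete downwards and (when nonempty)
admits a maximal element, then `argmax f` is a nonempty quasisublattice of `X`. -/
theorem argmax_nonempty_quasisublattice_of_meetSuperextremal {X C : Type*} [Lattice X]
    [Nonempty X] [LinearOrder C] (f : X → C) (hf : MeetSuperextremal f)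
    (hcc : ∀ t : C, ChainCompleteDownwardsOn {x : X | t ≤ f x})
    (hmax : ∀ t : C, ({x : X | t ≤ f x}).Nonempty → HasMaximalOn {x : X | t ≤ f x}) :
    ({x : X | ∀ y : X, f y ≤ f x}).Nonempty ∧ Quasisublattice {x : X | ∀ y : X, f y ≤ f x} := by
  refine ⟨?_, hf.quasisublattice_argmax⟩
  have hraise : ∀ t ∈ range f, (infRaising f t).Nonempty := by
    rintro _ ⟨x, rfl⟩
    obtain ⟨m, hm, hm_max⟩ := hmax (f x) ⟨x, le_rfl⟩
    exact ⟨m, hf.mem_infRaising_of_maximal ⟨hm, fun y hy hmy => (hm_max y hy hmy).le⟩⟩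
  obtain ⟨x, hx⟩ := nonempty_iInter_of_antitoneSelections_nonempty
    (antitone_levelSets f (range f)) (fun t => hcc t)
    (antitoneSelections_levelSets_nonempty (fun t _ => hcc t) hraise)
  exact ⟨x, fun y => mem_iInter.1 hx ⟨f y, mem_range_self y⟩⟩
end

section
/- Consider a normal form game with nonempty player set N, strategy sets S_i and payoff functions u_i : ∏_j S_j → C_i with each C_i a linearly ordered set. Assume that for every i ∈ N: (1) S_i is a complete lattice; (2) for every s_{-i} ∈ S_{-i}, the section u_i(·, s_{-i}) : S_i → C_i is weakly pseudo-supermodular; (3) u_i is upper-crossing relative to (S_i, S_{-i}); (4) for every s_{-i} ∈ S_{-i} and every t ∈ C_i, the set [u_i(·, s_{-i}) ≥ t] = {a ∈ S_i : u_i(a, s_{-i}) ≥ t}, with the order induced from S_i, is chain-complete downwards and chain-bounded above. Then the game admits a largest Nash equilibrium, i.e., a Nash equilibrium e such that every Nash equilibrium x satisfies x ≤ e in the product order on ∏_j S_j. -/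
/-!
The main point is that each section `f = u i (·, t)` attains its maximum. Call `x` good if every
point of a level set `{a | c ≤ f a}` with `c ≥ f x` has a meet with `x` inside that level set. The
existence of such meets survives infima of chains, and weak pseudo-supermodularity makes the maximal
points of these level sets below `x` good again. So a maximal chain of good points, descending in
`x` while increasing in `f x`, reaches arbitrarily high values of `f`; a Cantor-type intersection
argument below its infimum then yields a point lying in all the nonempty level sets. Consequently
the best replies of every player have a greatest element; it is monotone in the strategies of the
others by the upper-crossing property, and Tarski's fixed point theorem applies.
-/

open Classical in
/-- Combine a strategy `a` of player `i` with a joint strategy `t` of the other players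
into a joint strategy of all players. -/
noncomputable def combine {N : Type*} {S : N → Type*} (i : N) (a : S i)
    (t : ∀ j : {j : N // j ≠ i}, S j.1) : ∀ j, S j :=
  fun j => if h : j = i then cast (congrArg S h.symm) a else t ⟨j, h⟩

/-- A joint strategy `x` is a Nash equilibrium: no player `i` can improve the payoff
`u i x` by a unilateral deviation `y`. -/
def IsNashEquilibrium {N : Type*} {S : N → Type*} {C : N → Type*} [∀ i, LinearOrder (C i)]
    (u : ∀ i, (∀ j, S j) → C i) (x : ∀ j, S j) : Prop :=
  ∀ i, ∀ y : S i, u i (combine i y (fun j => x j.1)) ≤ u i x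

/-- `f` is weakly pseudo-supermodular if `f (x ⊔ y) < f x ⊓ f y → f x < f (x ⊓ y)`
for all `x, y`. -/
def WeaklyPseudoSupermodular {X C : Type*} [Lattice X] [LinearOrder C] (f : X → C) : Prop :=
  ∀ x y : X, f (x ⊔ y) < f x ⊓ f y → f x < f (x ⊓ y)

/-- A subset `A` of a poset is chain-bounded above if every nonempty chain contained
in `A` has an upper bound belonging to `A`. -/
def ChainBoundedAboveOn {X : Type*} [PartialOrder X] (A : Set X) : Prop :=
  ∀ c : Set X, c ⊆ A → c.Nonempty → IsChain (· ≤ ·) c → ∃ u ∈ A, ∀ x ∈ c, x ≤ u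

section RelativeMeets

open Set

variable {X : Type*}

/-- `x` has relative meets with the points of `A`: each `y ∈ A` has, together with `x`, a meet
computed inside `A`, that is, a greatest element of `A` below both. The point `x` itself need not
belong to `A`. -/
def HasRelMeets [PartialOrder X] (A : Set X) (x : X) : Prop :=
  ∀ y ∈ A, ∃ z, IsGreatest (A ∩ Iic y ∩ Iic x) z

lemma ChainCompleteDownwardsOn.inter_isLowerSet [PartialOrder X] {A L : Set X}
    (hA : ChainCompleteDownwardsOn A) (hL : IsLowerSet L) : ChainCompleteDownwardsOn (A ∩ L) := by
  intro D hDA hD hchain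
  obtain ⟨m, hmA, hmD, hm⟩ := hA D (hDA.trans inter_subset_left) hD hchain
  obtain ⟨d, hd⟩ := hD
  exact ⟨m, ⟨hmA, hL (hmD d hd) (hDA hd).2⟩, hmD, fun b hb => hm b hb.1⟩

/-- The greatest elements below the members of the chain form a chain in `A`, whose infimum in `A`
is the required one. -/
lemma ChainCompleteDownwardsOn.exists_isGreatest_inter_Iic [PartialOrder X] {A D : Set X} {s : X}
    (hA : ChainCompleteDownwardsOn A) (hD : IsChain (· ≤ ·) D) (hne : D.Nonempty)
    (hs : IsGLB D s) (h : ∀ x ∈ D, ∃ g, IsGreatest (A ∩ Iic x) g) :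
    ∃ g, IsGreatest (A ∩ Iic s) g := by
  choose! g hg using h
  have hg_mono : MonotoneOn g D := fun x hx y hy hxy =>
    (hg y hy).2 ⟨(hg x hx).1.1, (hg x hx).1.2.trans hxy⟩
  have hg_chain : IsChain (· ≤ ·) (g '' D) := by
    rintro _ ⟨x, hx, rfl⟩ _ ⟨y, hy, rfl⟩ _
    exact (hD.total hx hy).imp (hg_mono hx hy) (hg_mono hy hx)
  obtain ⟨m, hmA, hmD, hm⟩ :=
    hA (g '' D) (image_subset_iff.2 fun x hx => (hg x hx).1.1) (hne.image g) hg_chain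
  refine ⟨m, ⟨hmA, hs.2 fun x hx => ?_⟩, fun b hb => hm b hb.1 ?_⟩
  · exact (hmD _ (mem_image_of_mem g hx)).trans (hg x hx).1.2
  · rintro _ ⟨x, hx, rfl⟩
    exact (hg x hx).2 ⟨hb.1, hb.2.trans (hs.1 hx)⟩

lemma HasRelMeets.of_isGLB [PartialOrder X] {A D : Set X} {s : X}
    (hA : ChainCompleteDownwardsOn A) (hD : IsChain (· ≤ ·) D) (hs : IsGLB D s)
    (h : ∀ x ∈ D, HasRelMeets A x) : HasRelMeets A s := by
  intro y hy
  rcases D.eq_empty_or_nonempty with rfl | hne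
  · have hys : y ≤ s := hs.2 fun x hx => hx.elim
    exact ⟨y, ⟨⟨hy, le_rfl⟩, hys⟩, fun z hz => hz.1.2⟩
  · exact (hA.inter_isLowerSet (isLowerSet_Iic y)).exists_isGreatest_inter_Iic hD hne hs
      fun x hx => h x hx y hy

lemma ChainBoundedAboveOn.exists_le_maximal [PartialOrder X] {A : Set X}
    (hA : ChainBoundedAboveOn A) {a : X} (ha : a ∈ A) : ∃ m, a ≤ m ∧ Maximal (· ∈ A) m :=
  zorn_le_nonempty₀ A (fun D hDA hD y hy => hA D hDA ⟨y, hy⟩ hD) a ha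

lemma HasRelMeets.exists_maximal [PartialOrder X] {A : Set X} {x : X} (hx : HasRelMeets A x)
    (hA : ChainBoundedAboveOn A) (hne : A.Nonempty) : ∃ m, Maximal (· ∈ A ∩ Iic x) m := by
  have hbdd : ChainBoundedAboveOn (A ∩ Iic x) := by
    intro D hD hDne hchain
    obtain ⟨v, hvA, hv⟩ := hA D (hD.trans inter_subset_left) hDne hchain
    obtain ⟨w, ⟨⟨hwA, -⟩, hwx⟩, hw⟩ := hx v hvA
    exact ⟨w, ⟨hwA, hwx⟩, fun d hd => hw ⟨⟨(hD hd).1, hv d hd⟩, (hD hd).2⟩⟩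
  obtain ⟨a, ha⟩ := hne
  obtain ⟨b, ⟨⟨hbA, -⟩, hbx⟩, -⟩ := hx a ha
  obtain ⟨m, -, hm⟩ := hbdd.exists_le_maximal ⟨hbA, hbx⟩
  exact ⟨m, hm⟩

/-- Shrink `z` to a minimal point such that every `A i ∩ Iic z` has a greatest element. Each of
these greatest elements inherits the property of `z`, so it equals `z`. -/
lemma nonempty_iInter_of_isGreatest_inter_Iic [CompleteLattice X] {ι : Type*} {A : ι → Set X}
    (hA : ∀ i j, A i ⊆ A j ∨ A j ⊆ A i) (hcc : ∀ i, ChainCompleteDownwardsOn (A i)) {z : X}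
    (hz : ∀ i, ∃ g, IsGreatest (A i ∩ Iic z) g) : (⋂ i, A i).Nonempty := by
  let Z : Set X := {w | ∀ i, ∃ g, IsGreatest (A i ∩ Iic w) g}
  obtain ⟨w, -, hw⟩ : ∃ w, w ≤ z ∧ Minimal (· ∈ Z) w := by
    refine zorn_le_nonempty₀ (α := Xᵒᵈ) Z (fun D hDZ hD y hy => ?_) z hz
    exact ⟨sInf (α := X) D, fun i => (hcc i).exists_isGreatest_inter_Iic hD.symm ⟨y, hy⟩
      (isGLB_sInf (α := X) D) fun x hx => hDZ hx i, fun x hx => sInf_le (α := X) hx⟩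
  choose g hg using hw.1
  have hgZ (j : ι) : g j ∈ Z := by
    intro i
    rcases hA i j with hij | hji
    · exact ⟨g i, ⟨(hg i).1.1, (hg j).2 ⟨hij (hg i).1.1, (hg i).1.2⟩⟩,
        fun b hb => (hg i).2 ⟨hb.1, hb.2.trans (hg j).1.2⟩⟩
    · exact ⟨g j, ⟨hji (hg j).1.1, le_rfl⟩, fun b hb => hb.2⟩
  refine ⟨w, mem_iInter.2 fun j => ?_⟩
  exact (hw.eq_of_le (hgZ j) (hg j).1.2) ▸ (hg j).1.1

end RelativeMeets

section Argmax

open Set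

variable {X C : Type*} [LinearOrder C]

/-- The set of points at which `f` attains its maximum. -/
def argmax (f : X → C) : Set X :=
  {m | ∀ a, f a ≤ f m}

lemma WeaklyPseudoSupermodular.le_map_sup_or_lt_map_inf [Lattice X] {f : X → C}
    (hf : WeaklyPseudoSupermodular f) {x y : X} {c : C} (hx : c ≤ f x) (hy : c ≤ f y) :
    c ≤ f (x ⊔ y) ∨ f x < f (x ⊓ y) :=
  (le_or_gt c (f (x ⊔ y))).imp_right fun h => hf x y (h.trans_le (le_inf hx hy))

lemma WeaklyPseudoSupermodular.le_map_sup_of_mem_argmax [Lattice X] {f : X → C}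
    (hf : WeaklyPseudoSupermodular f) {m : X} (hm : m ∈ argmax f) (x : X) : f x ≤ f (m ⊔ x) :=
  (hf.le_map_sup_or_lt_map_inf (hm x) le_rfl).resolve_right (hm _).not_gt

/-- For `y` in the level set at `d`, let `z` be its meet with `x` there. If `m ⊔ z` reaches the
level `c`, maximality of `m` gives `z ≤ m`; otherwise `z ⊓ m` is still in the level set at `d`. -/
lemma WeaklyPseudoSupermodular.hasRelMeets_of_maximal [Lattice X] {f : X → C}
    (hf : WeaklyPseudoSupermodular f) {x m : X} {c d : C} (hcd : c ≤ d)
    (hm : Maximal (· ∈ {a | c ≤ f a} ∩ Iic x) m) (hx : HasRelMeets {a | d ≤ f a} x) :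
    HasRelMeets {a | d ≤ f a} m := by
  intro y hy
  obtain ⟨z, ⟨⟨hdz, hzy⟩, hzx⟩, hz⟩ := hx y hy
  obtain ⟨hcm, hmx⟩ := hm.1
  have le_z {b : X} (hb : b ∈ {a | d ≤ f a} ∩ Iic y ∩ Iic m) : b ≤ z :=
    hz ⟨hb.1, hb.2.trans hmx⟩
  rcases hf.le_map_sup_or_lt_map_inf (hcd.trans hdz) hcm with hsup | hinf
  · have hzm : z ≤ m := le_sup_left.trans (hm.2 ⟨hsup, sup_le hzx hmx⟩ le_sup_right)
    exact ⟨z, ⟨⟨hdz, hzy⟩, hzm⟩, fun b hb => le_z hb⟩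
  · exact ⟨z ⊓ m, ⟨⟨hdz.trans hinf.le, inf_le_left.trans hzy⟩, inf_le_right⟩,
      fun b hb => le_inf (le_z hb) hb.2⟩

/-- `x` is good for `f`: it has relative meets with every level set of `f` at a level `c ≥ f x`.
These are the points from which the search for a maximizer can continue downwards. -/
def HasUpperLevelMeets [PartialOrder X] (f : X → C) (x : X) : Prop :=
  ∀ c, f x ≤ c → HasRelMeets {a | c ≤ f a} x

/-- `y` is a descent from `x` along which `f` does not decrease. -/
def ImprovesBelow [LE X] (f : X → C) (x y : X) : Prop :=
  y ≤ x ∧ f x ≤ f y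

lemma exists_hasUpperLevelMeets_le_of_isChain [CompleteLattice X] {f : X → C}
    (hf : WeaklyPseudoSupermodular f) (hcc : ∀ c, ChainCompleteDownwardsOn {a | c ≤ f a})
    (hba : ∀ c, ChainBoundedAboveOn {a | c ≤ f a}) {D : Set X} (hD : IsChain (· ≤ ·) D)
    (hgood : ∀ x ∈ D, HasUpperLevelMeets f x) {a : X} (ha : ∀ x ∈ D, f x ≤ f a) :
    ∃ m, HasUpperLevelMeets f m ∧ m ∈ lowerBounds D ∧ f a ≤ f m := by
  have hinf {c : C} (hc : f a ≤ c) : HasRelMeets {b | c ≤ f b} (sInf D) :=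
    .of_isGLB (hcc c) hD (isGLB_sInf D) fun x hx => hgood x hx c ((ha x hx).trans hc)
  obtain ⟨m, hm⟩ := (hinf le_rfl).exists_maximal (hba (f a)) ⟨a, le_rfl⟩
  obtain ⟨ham, hmD⟩ : f a ≤ f m ∧ m ≤ sInf D := hm.1
  refine ⟨m, fun c hc => ?_, fun x hx => hmD.trans (sInf_le hx), ham⟩
  exact hf.hasRelMeets_of_maximal (ham.trans hc) hm (hinf (ham.trans hc))

lemma argmax_nonempty_of_isChain_improvesBelow [CompleteLattice X] {f : X → C}
    (hcc : ∀ c, ChainCompleteDownwardsOn {a | c ≤ f a}) {D : Set X}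
    (hD : IsChain (ImprovesBelow f) D) (hcofinal : ∀ a, ∃ x ∈ D, f a ≤ f x) :
    (argmax f).Nonempty := by
  have hD_le : IsChain (· ≤ ·) D := (hD.mono_rel fun x y h => h.1).symm
  have hgreatest (a : X) : ∃ g, IsGreatest ({b | f a ≤ f b} ∩ Iic (sInf D)) g := by
    obtain ⟨y, hyD, hay⟩ := hcofinal a
    have hy : ∀ x ∈ D, ∃ g, IsGreatest ({b | f a ≤ f b} ∩ Iic y ∩ Iic x) g := by
      intro x hxD
      rcases eq_or_ne x y with rfl | hne
      · exact ⟨x, ⟨⟨hay, le_rfl⟩, le_rfl⟩, fun b hb => hb.2⟩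
      rcases hD hxD hyD hne with ⟨hyx, -⟩ | ⟨hxy, hfyx⟩
      · exact ⟨y, ⟨⟨hay, le_rfl⟩, hyx⟩, fun b hb => hb.1.2⟩
      · exact ⟨x, ⟨⟨hay.trans hfyx, hxy⟩, le_rfl⟩, fun b hb => hb.2⟩
    have := ((hcc (f a)).inter_isLowerSet (isLowerSet_Iic y)).exists_isGreatest_inter_Iic
      hD_le ⟨y, hyD⟩ (isGLB_sInf D) hy
    rwa [inter_assoc, inter_eq_self_of_subset_right (Iic_subset_Iic.2 (sInf_le hyD))] at this
  obtain ⟨m, hm⟩ := nonempty_iInter_of_isGreatest_inter_Iic (A := fun a => {b | f a ≤ f b})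
    (fun a b => (le_total (f b) (f a)).imp (fun h _ => h.trans) fun h _ => h.trans)
    (fun a => hcc (f a)) hgreatest
  exact ⟨m, fun a => mem_iInter.1 hm a⟩

lemma argmax_nonempty [CompleteLattice X] {f : X → C} (hf : WeaklyPseudoSupermodular f)
    (hcc : ∀ c, ChainCompleteDownwardsOn {a | c ≤ f a})
    (hba : ∀ c, ChainBoundedAboveOn {a | c ≤ f a}) : (argmax f).Nonempty := by
  let r (x y : {x // HasUpperLevelMeets f x}) : Prop := ImprovesBelow f x y
  obtain ⟨M, hM⟩ : ∃ M, IsMaxChain r M := ⟨_, maxChain_spec⟩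
  have hD : IsChain (ImprovesBelow f) (Subtype.val '' M) :=
    hM.1.image_of_map_rel r _ Subtype.val fun _ _ => id
  by_contra hempty
  obtain ⟨a, ha⟩ : ∃ a, ∀ x ∈ Subtype.val '' M, f x < f a := by
    by_contra! h
    exact hempty (argmax_nonempty_of_isChain_improvesBelow hcc hD h)
  obtain ⟨m, hm_good, hmD, ham⟩ := exists_hasUpperLevelMeets_le_of_isChain hf hcc hba
    (hD.mono_rel fun x y h => h.1).symm (by rintro _ ⟨x, -, rfl⟩; exact x.2)
    fun x hx => (ha x hx).le
  have hinsert : IsChain r (insert ⟨m, hm_good⟩ M) := hM.1.insert fun x hx _ =>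
    have hxD := mem_image_of_mem Subtype.val hx
    Or.inr ⟨hmD hxD, (ha x hxD).le.trans ham⟩
  have hmM : ⟨m, hm_good⟩ ∈ M := hM.2 hinsert (subset_insert _ _) ▸ mem_insert _ _
  exact ham.not_gt (ha m ⟨_, hmM, rfl⟩)

lemma exists_isGreatest_argmax [CompleteLattice X] {f : X → C} (hf : WeaklyPseudoSupermodular f)
    (hcc : ∀ c, ChainCompleteDownwardsOn {a | c ≤ f a})
    (hba : ∀ c, ChainBoundedAboveOn {a | c ≤ f a}) : ∃ m, IsGreatest (argmax f) m := by
  obtain ⟨a, ha⟩ := argmax_nonempty hf hcc hba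
  obtain ⟨m, -, hm⟩ := (hba (f a)).exists_le_maximal (a := a) le_rfl
  refine ⟨m, fun b => (ha b).trans hm.1, fun y hy => ?_⟩
  have hsup : f a ≤ f (y ⊔ m) := hm.1.trans (hf.le_map_sup_of_mem_argmax hy m)
  exact le_sup_left.trans (hm.2 hsup le_sup_right)

lemma WeaklyPseudoSupermodular.le_of_isGreatest_argmax [Lattice X] {C' : Type*} [LinearOrder C']
    {f : X → C} {g : X → C'} (hf : WeaklyPseudoSupermodular f)
    (hfg : ∀ a a', a < a' → f a ≤ f a' → ∃ v, a' ≤ v ∧ g a ≤ g v) {m n : X}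
    (hm : m ∈ argmax f) (hn : IsGreatest (argmax g) n) : m ≤ n := by
  by_contra hmn
  have hlt : n < m ⊔ n := right_lt_sup.2 hmn
  obtain ⟨v, hv, hgv⟩ := hfg n (m ⊔ n) hlt (hf.le_map_sup_of_mem_argmax hm n)
  have hvn : v ≤ n := hn.2 fun a => (hn.1 a).trans hgv
  exact hlt.not_ge (hv.trans hvn)

end Argmax

section NashEquilibrium

variable {N : Type*} {S : N → Type*}

lemma combine_self (i : N) (x : ∀ j, S j) : combine i (x i) (fun j => x j.1) = x := by
  funext j
  unfold combine
  split_ifs with h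
  · subst h
    rfl
  · rfl

variable {C : N → Type*} [∀ i, LinearOrder (C i)] {u : ∀ i, (∀ j, S j) → C i}

lemma isNashEquilibrium_iff_forall_mem_argmax {x : ∀ j, S j} :
    IsNashEquilibrium u x ↔ ∀ i, x i ∈ argmax fun a => u i (combine i a fun j => x j.1) := by
  simp only [IsNashEquilibrium, argmax, Set.mem_ofPred_eq, combine_self]

lemma exists_isGreatest_nashEquilibrium_of_monotone [∀ i, CompleteLattice (S i)]
    {B : ∀ i, (∀ j : {j : N // j ≠ i}, S j.1) → S i}
    (hB : ∀ i t, IsGreatest (argmax fun a => u i (combine i a t)) (B i t))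
    (hmono : ∀ i, Monotone (B i)) : ∃ e, IsGreatest {x | IsNashEquilibrium u x} e := by
  let F : (∀ j, S j) →o (∀ j, S j) :=
    ⟨fun x i => B i fun j => x j.1, fun x y hxy i => hmono i fun j => hxy j.1⟩
  refine ⟨F.gfp, isNashEquilibrium_iff_forall_mem_argmax.2 fun i => ?_, fun x hx => ?_⟩
  · have hfix : B i (fun j => F.gfp j.1) = F.gfp i := congrFun F.map_gfp i
    exact hfix ▸ (hB i fun j => F.gfp j.1).1
  · exact F.le_gfp fun i => (hB i _).2 (isNashEquilibrium_iff_forall_mem_argmax.1 hx i)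

end NashEquilibrium

/-- Theorem 4.8: a normal form game in which every strategy set is a complete lattice,
every section of a payoff function is weakly pseudo-supermodular, every payoff function
is upper-crossing, and every upper level set of a section is chain-complete downwards
and chain-bounded above, admits a largest Nash equilibrium. -/
theorem exists_largest_nashEquilibrium {N : Type*} [Nonempty N] {S : N → Type*}
    [∀ i, CompleteLattice (S i)] {C : N → Type*} [∀ i, LinearOrder (C i)]
    (u : ∀ i, (∀ j, S j) → C i)
    (hwps : ∀ i, ∀ t : ∀ j : {j : N // j ≠ i}, S j.1,
      WeaklyPseudoSupermodular (fun a : S i => u i (combine i a t)))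
    (huc : ∀ i, ∀ a a' : S i, a < a' → ∀ t t' : (∀ j : {j : N // j ≠ i}, S j.1), t < t' →
      u i (combine i a t) ≤ u i (combine i a' t) →
      ∃ v : S i, a' ≤ v ∧ u i (combine i a t') ≤ u i (combine i v t'))
    (hcc : ∀ i, ∀ t : ∀ j : {j : N // j ≠ i}, S j.1, ∀ c : C i,
      ChainCompleteDownwardsOn {a : S i | c ≤ u i (combine i a t)})
    (hba : ∀ i, ∀ t : ∀ j : {j : N // j ≠ i}, S j.1, ∀ c : C i,
      ChainBoundedAboveOn {a : S i | c ≤ u i (combine i a t)}) :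
    ∃ e : ∀ j, S j, IsNashEquilibrium u e ∧
      ∀ x : ∀ j, S j, IsNashEquilibrium u x → x ≤ e := by
  have hgreatest (i : N) (t : ∀ j : {j : N // j ≠ i}, S j.1) :
      ∃ m, IsGreatest (argmax fun a : S i => u i (combine i a t)) m :=
    exists_isGreatest_argmax (hwps i t) (hcc i t) (hba i t)
  choose B hB using hgreatest
  have hmono (i : N) : Monotone (B i) := by
    intro t t' htt'
    rcases htt'.eq_or_lt with rfl | hlt
    · exact le_rfl
    · exact (hwps i t).le_of_isGreatest_argmax (fun a a' haa' => huc i a a' haa' t t' hlt)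
        (hB i t).1 (hB i t')
  exact exists_isGreatest_nashEquilibrium_of_monotone hB hmono
end

section
/- A nonempty lattice X is a complete lattice (every subset of X has a supremum and an infimum in X) if and only if X is chain-complete downwards and chain-bounded above. -/
/-- A poset is chain-complete downwards if every nonempty chain has an infimum. -/
def ChainCompleteDownwards (X : Type*) [PartialOrder X] : Prop :=
  ∀ c : Set X, c.Nonempty → IsChain (· ≤ ·) c → ∃ m : X, IsGLB c m

/-- A poset is chain-bounded above if every nonempty chain has an upper bound. -/
def ChainBoundedAbove (X : Type*) [PartialOrder X] : Prop :=
  ∀ c : Set X, c.Nonempty → IsChain (· ≤ ·) c → ∃ u : X, ∀ x ∈ c, x ≤ u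

/-!
Zorn's lemma yields a maximal element, which is a top element because any two elements have a
common upper bound; hence every subset `A` has an upper bound. Zorn's lemma, applied downwards
inside `upperBounds A`, which contains the infima of its nonempty chains, yields a minimal upper
bound of `A`. Upper bounds of `A` are closed under `⊓`, so a minimal one is the least one.
Infima are suprema of sets of lower bounds.
-/

theorem exists_minimal_of_chains_bounded_below {X : Type*} [Preorder X] {S : Set X}
    (hS : S.Nonempty)
    (h : ∀ c ⊆ S, IsChain (· ≤ ·) c → c.Nonempty → ∃ b ∈ S, b ∈ lowerBounds c) :
    ∃ m, Minimal (· ∈ S) m := by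
  obtain ⟨x, hx⟩ := hS
  obtain ⟨m, -, hm⟩ :=
    @zorn_le_nonempty₀ Xᵒᵈ _ S (fun c hcS hc y hy ↦ h c hcS hc.symm ⟨y, hy⟩) x hx
  exact ⟨m, hm⟩

theorem isLeast_of_minimal_of_directedOn_ge {X : Type*} [Preorder X] {S : Set X} {m : X}
    (hm : Minimal (· ∈ S) m) (hS : DirectedOn (· ≥ ·) S) : IsLeast S m := by
  refine ⟨hm.prop, fun x hx ↦ ?_⟩
  obtain ⟨z, hz, hzm, hzx⟩ := hS m hm.prop x hx
  exact (hm.le_of_le hz hzm).trans hzx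

theorem directedOn_ge_upperBounds {X : Type*} [SemilatticeInf X] (A : Set X) :
    DirectedOn (· ≥ ·) (upperBounds A) :=
  directedOn_of_inf_mem fun _ _ hu hv _ ha ↦ le_inf (hu ha) (hv ha)

namespace ChainBoundedAbove

theorem exists_isMax {X : Type*} [PartialOrder X] [Nonempty X] (hX : ChainBoundedAbove X) :
    ∃ t : X, IsMax t :=
  zorn_le_nonempty fun c hc hne ↦ hX c hne hc

theorem exists_isTop {X : Type*} [PartialOrder X] [IsDirectedOrder X] [Nonempty X]
    (hX : ChainBoundedAbove X) : ∃ t : X, IsTop t :=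
  hX.exists_isMax.imp fun _ ↦ IsMax.isTop

end ChainBoundedAbove

namespace ChainCompleteDownwards

theorem exists_minimal_upperBounds {X : Type*} [PartialOrder X] (hX : ChainCompleteDownwards X)
    {A : Set X} (hA : BddAbove A) : ∃ m, Minimal (· ∈ upperBounds A) m := by
  refine exists_minimal_of_chains_bounded_below hA fun c hcA hc hne ↦ ?_
  obtain ⟨g, hg⟩ := hX c hne hc
  have hgA : g ∈ upperBounds A := fun a ha ↦ hg.2 fun z hz ↦ hcA hz ha
  exact ⟨g, hgA, hg.1⟩

theorem exists_isLUB {X : Type*} [SemilatticeInf X] (hX : ChainCompleteDownwards X)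
    {A : Set X} (hA : BddAbove A) : ∃ s, IsLUB A s :=
  (hX.exists_minimal_upperBounds hA).imp fun _ hm ↦
    isLeast_of_minimal_of_directedOn_ge hm (directedOn_ge_upperBounds A)

end ChainCompleteDownwards

theorem complete_iff_chainCompleteDownwards_and_chainBoundedAbove_general {X : Type*}
    [SemilatticeInf X] [IsDirectedOrder X] [Nonempty X] :
    (∀ A : Set X, (∃ s : X, IsLUB A s) ∧ (∃ m : X, IsGLB A m)) ↔
      ChainCompleteDownwards X ∧ ChainBoundedAbove X := by
  constructor
  · intro h
    exact ⟨fun c _ _ ↦ (h c).2, fun c _ _ ↦ (h c).1.imp fun _ hs ↦ hs.1⟩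
  · rintro ⟨hdown, hup⟩
    obtain ⟨t, ht⟩ := hup.exists_isTop
    have exists_lub (A : Set X) : ∃ s, IsLUB A s := hdown.exists_isLUB ⟨t, fun a _ ↦ ht a⟩
    exact fun A ↦ ⟨exists_lub A, (exists_lub (lowerBounds A)).imp fun _ ↦ isLUB_lowerBounds.1⟩

/-- Lemma 4.10: a nonempty lattice is complete (every subset has a supremum and an
infimum) if and only if it is chain-complete downwards and chain-bounded above. -/
theorem complete_iff_chainCompleteDownwards_and_chainBoundedAbove {X : Type*} [Lattice X]
    [Nonempty X] :
    (∀ A : Set X, (∃ s : X, IsLUB A s) ∧ (∃ m : X, IsGLB A m)) ↔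
      ChainCompleteDownwards X ∧ ChainBoundedAbove X :=
  complete_iff_chainCompleteDownwards_and_chainBoundedAbove_general
end

section
/- Let P be a poset equipped with its interval topology. If P is compact in this topology, then P is chain-complete: every nonempty chain in P has a supremum and an infimum in P. -/
/-- The interval topology on a poset: closed sets are generated by the closed rays
`{x | x ≤ a}` and `{x | a ≤ x}`, i.e., the topology is generated by their complements. -/
def intervalTopology (P : Type*) [Preorder P] : TopologicalSpace P :=
  TopologicalSpace.generateFrom
    ({s | ∃ a : P, s = {x | x ≤ a}ᶜ} ∪ {s | ∃ a : P, s = {x | a ≤ x}ᶜ})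

/-! A directed set is a monotone net indexed by itself. Each tail of a monotone net lies in the
closed ray above any of its earlier terms, and the whole net lies in the closed ray below any of
its upper bounds; hence every cluster point of the net is a least upper bound of its range, and
compactness provides a cluster point. -/

open Filter Set

section ClosedRays

variable {α : Type*} [Preorder α] [TopologicalSpace α] [ClosedIicTopology α] [ClosedIciTopology α]

theorem isLUB_range_of_mapClusterPt_atTop {ι : Type*} [Preorder ι] {f : ι → α} {a : α}
    (hf : Monotone f) (ha : MapClusterPt a atTop f) : IsLUB (range f) a := by
  constructor
  · rintro _ ⟨i, rfl⟩
    exact isClosed_Ici.mem_of_mapClusterPt ha ((eventually_ge_atTop i).mono fun _ hij ↦ hf hij)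
  · intro u hu
    exact isClosed_Iic.mem_of_mapClusterPt ha (.of_forall fun i ↦ hu (mem_range_self i))

theorem exists_isLUB_of_directedOn_of_subset_isCompact {S K : Set α} (hne : S.Nonempty)
    (hS : DirectedOn (· ≤ ·) S) (hK : IsCompact K) (hSK : S ⊆ K) : ∃ a ∈ K, IsLUB S a := by
  have : Nonempty S := hne.to_subtype
  have : IsDirectedOrder S := hS.isDirectedOrder
  obtain ⟨a, haK, ha⟩ : ∃ a ∈ K, MapClusterPt a atTop ((↑) : S → α) :=
    hK.exists_mapClusterPt (tendsto_principal.2 (.of_forall fun x ↦ hSK x.2))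
  refine ⟨a, haK, ?_⟩
  simpa only [Subtype.range_coe] using
    isLUB_range_of_mapClusterPt_atTop (Subtype.mono_coe (· ∈ S)) ha

theorem exists_isGLB_of_directedOn_of_subset_isCompact {S K : Set α} (hne : S.Nonempty)
    (hS : DirectedOn (· ≥ ·) S) (hK : IsCompact K) (hSK : S ⊆ K) : ∃ a ∈ K, IsGLB S a :=
  exists_isLUB_of_directedOn_of_subset_isCompact (α := αᵒᵈ) hne hS hK hSK

end ClosedRays

section IntervalTopology

variable (P : Type*) [Preorder P]

theorem closedIicTopology_intervalTopology : @ClosedIicTopology P (intervalTopology P) _ :=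
  letI := intervalTopology P
  ⟨fun a ↦ ⟨TopologicalSpace.isOpen_generateFrom_of_mem (.inl ⟨a, rfl⟩)⟩⟩

theorem closedIciTopology_intervalTopology : @ClosedIciTopology P (intervalTopology P) _ :=
  letI := intervalTopology P
  ⟨fun a ↦ ⟨TopologicalSpace.isOpen_generateFrom_of_mem (.inr ⟨a, rfl⟩)⟩⟩

end IntervalTopology

theorem chainComplete_of_compact_intervalTopology_general {P : Type*} [Preorder P]
    (hc : @CompactSpace P (intervalTopology P)) {c : Set P} (hne : c.Nonempty) :
    (DirectedOn (· ≤ ·) c → ∃ s : P, IsLUB c s) ∧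
      (DirectedOn (· ≥ ·) c → ∃ m : P, IsGLB c m) := by
  let := intervalTopology P
  have := closedIicTopology_intervalTopology P
  have := closedIciTopology_intervalTopology P
  constructor <;> intro hdir
  · obtain ⟨s, -, hs⟩ :=
      exists_isLUB_of_directedOn_of_subset_isCompact hne hdir isCompact_univ (subset_univ c)
    exact ⟨s, hs⟩
  · obtain ⟨m, -, hm⟩ :=
      exists_isGLB_of_directedOn_of_subset_isCompact hne hdir isCompact_univ (subset_univ c)
    exact ⟨m, hm⟩

/-- Lemma 4.12: a poset that is compact in its interval topology is chain-complete:
every nonempty chain has a supremum and an infimum. -/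
theorem chainComplete_of_compact_intervalTopology {P : Type*} [PartialOrder P]
    (hc : @CompactSpace P (intervalTopology P)) :
    ∀ c : Set P, c.Nonempty → IsChain (· ≤ ·) c →
      (∃ s : P, IsLUB c s) ∧ (∃ m : P, IsGLB c m) := by
  intro c hne hch
  have hge : IsChain (· ≥ ·) c := hch.symm
  exact (chainComplete_of_compact_intervalTopology_general hc hne).imp
    (fun exists_lub ↦ exists_lub hch.directedOn) (fun exists_glb ↦ exists_glb hge.directedOn)
end
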